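/- In lossless transmission of arbitrarily correlated sources (S1, S2) over a DM two-way channel p(y1,y2|x1,x2) with general (adaptive) encoders, if source-channel rate b is achievable, then there exists a joint input distribution p(x1,x2) on X1 × X2 such that H(S1|S2) ≤ b·I(X1;Y2|X2) and H(S2|S1) ≤ b·I(X2;Y1|X1), where (Y1, Y2) is obtained from (X1, X2) through the per-letter channel law p(y1,y2|x1,x2). -/

import Mathlib

open scoped BigOperators Classical

noncomputable section

/-- Probability that the random variable `X` equals `a`, under the pmf `μ`
on the finite sample space `Ω`. -/
def prD {Ω α : Type} [Fintype Ω] (μ : Ω → ℝ) (X : Ω → α) (a : α) : ℝ :=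
  ∑ ω, if X ω = a then μ ω else 0

/-- Shannon entropy (in nats) of the random variable `X` under the pmf `μ`. -/
def ent {Ω α : Type} [Fintype Ω] [Fintype α] (μ : Ω → ℝ) (X : Ω → α) : ℝ :=
  -∑ a, prD μ X a * Real.log (prD μ X a)

/-- Conditional entropy `H(X | Y)` under the pmf `μ`. -/
def condEnt {Ω α β : Type} [Fintype Ω] [Fintype α] [Fintype β]
    (μ : Ω → ℝ) (X : Ω → α) (Y : Ω → β) : ℝ :=
  ent μ (fun ω => (X ω, Y ω)) - ent μ Y

/-- Mutual information `I(X ; Y)` under the pmf `μ`. -/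
def mutInf {Ω α β : Type} [Fintype Ω] [Fintype α] [Fintype β]
    (μ : Ω → ℝ) (X : Ω → α) (Y : Ω → β) : ℝ :=
  ent μ X + ent μ Y - ent μ (fun ω => (X ω, Y ω))

/-- Conditional mutual information `I(X ; Y | Z)` under the pmf `μ`. -/
def condMutInf {Ω α β γ : Type} [Fintype Ω] [Fintype α] [Fintype β] [Fintype γ]
    (μ : Ω → ℝ) (X : Ω → α) (Y : Ω → β) (Z : Ω → γ) : ℝ :=
  condEnt μ X Z - condEnt μ X (fun ω => (Y ω, Z ω))

/-- `p` is a probability mass function on the finite type `α`. -/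
def IsPmf {α : Type} [Fintype α] (p : α → ℝ) : Prop :=
  (∀ a, 0 ≤ p a) ∧ ∑ a, p a = 1

/-- The channel input at time `i` produced by an adaptive two-way encoder `f`,
which maps the user's source block and the user's past channel outputs to a
channel input symbol. -/
def twInput {S X Y : Type} {m n : ℕ}
    (f : ∀ i : Fin n, (Fin m → S) → (Fin i → Y) → X)
    (sb : Fin m → S) (yb : Fin n → Y) (i : Fin n) : X :=
  f i sb (fun k => yb ⟨k.1, k.2.trans i.2⟩)

/-- Joint distribution of the source blocks and the channel output blocks of a
two-way channel driven by the adaptive encoders `f1, f2`. -/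
def twMeasureAdaptive {S1 S2 X1 X2 Y1 Y2 : Type} [Fintype S1] [Fintype S2]
    (pS : S1 × S2 → ℝ) (chan : X1 → X2 → Y1 × Y2 → ℝ) (m n : ℕ)
    (f1 : ∀ i : Fin n, (Fin m → S1) → (Fin i → Y1) → X1)
    (f2 : ∀ i : Fin n, (Fin m → S2) → (Fin i → Y2) → X2) :
    (Fin m → S1 × S2) × (Fin n → Y1 × Y2) → ℝ :=
  fun ω => (∏ i, pS (ω.1 i)) *
    ∏ j, chan (twInput f1 (fun i => (ω.1 i).1) (fun j' => (ω.2 j').1) j)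
      (twInput f2 (fun i => (ω.1 i).2) (fun j' => (ω.2 j').2) j) (ω.2 j)

/-- Average error probability for the two-way channel with adaptive encoders. -/
def twErrAdaptive {S1 S2 X1 X2 Y1 Y2 : Type} [Fintype S1] [Fintype S2]
    [Fintype X1] [Fintype X2] [Fintype Y1] [Fintype Y2]
    (pS : S1 × S2 → ℝ) (chan : X1 → X2 → Y1 × Y2 → ℝ) (m n : ℕ)
    (f1 : ∀ i : Fin n, (Fin m → S1) → (Fin i → Y1) → X1)
    (f2 : ∀ i : Fin n, (Fin m → S2) → (Fin i → Y2) → X2)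
    (g1 : (Fin m → S1) → (Fin n → Y1) → Fin m → S2)
    (g2 : (Fin m → S2) → (Fin n → Y2) → Fin m → S1) : ℝ :=
  ∑ ω : (Fin m → S1 × S2) × (Fin n → Y1 × Y2),
    twMeasureAdaptive pS chan m n f1 f2 ω *
    (if g1 (fun i => (ω.1 i).1) (fun j => (ω.2 j).1) = (fun i => (ω.1 i).2)
        ∧ g2 (fun i => (ω.1 i).2) (fun j => (ω.2 j).2) = (fun i => (ω.1 i).1)
      then 0 else 1)

/-- Source-channel rate `b` is achievable over the two-way channel with general
(adaptive) encoders. -/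
def twAchievableAdaptive {S1 S2 X1 X2 Y1 Y2 : Type} [Fintype S1] [Fintype S2]
    [Fintype X1] [Fintype X2] [Fintype Y1] [Fintype Y2]
    (pS : S1 × S2 → ℝ) (chan : X1 → X2 → Y1 × Y2 → ℝ) (b : ℝ) : Prop :=
  ∀ ε : ℝ, 0 < ε → ∃ m n : ℕ, 0 < m ∧ 0 < n ∧ (n : ℝ) = b * m ∧
    ∃ (f1 : ∀ i : Fin n, (Fin m → S1) → (Fin i → Y1) → X1)
      (f2 : ∀ i : Fin n, (Fin m → S2) → (Fin i → Y2) → X2)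
      (g1 : (Fin m → S1) → (Fin n → Y1) → Fin m → S2)
      (g2 : (Fin m → S2) → (Fin n → Y2) → Fin m → S1),
      twErrAdaptive pS chan m n f1 f2 g1 g2 < ε

/-! The key estimate bounds the conditional entropy of an output block by a cross entropy: test the
block against the causal product of the single-letter conditional laws taken at a uniformly random
time. The logarithm of that product is a sum over the letters, so the bound is `n` times one
single-letter conditional entropy, and feedback does no harm because a causal product is a
(sub-)probability however the inputs depend on past outputs. For the pair of both outputs given both
sources the channel is memoryless and the bound is an equality. Writing the mutual information
between a source block and the outputs of the other user through these entropies bounds it by the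
single-letter quantity at the time-averaged input law, which is the same law for both users. Fano's
inequality turns small error probability into the two inequalities up to a vanishing slack, and
compactness of the simplex of input laws removes the slack. -/

open Real

section CausalProduct

variable {α : Type} {n : ℕ}

/-- The weight of the word `y` under kernels `K j`, where `K j` sees the letters before
position `j`. It is the block law of letters generated one after the other. -/
def causalProd (K : ∀ j : Fin n, (Fin j → α) → α → ℝ) (y : Fin n → α) : ℝ :=
  ∏ j, K j (Fin.take j j.is_le' y) (y j)

lemma causalProd_nonneg {K : ∀ j : Fin n, (Fin j → α) → α → ℝ} (hK : ∀ j u a, 0 ≤ K j u a)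
    (y : Fin n → α) : 0 ≤ causalProd K y :=
  Finset.prod_nonneg fun j _ => hK j _ _

lemma take_castSucc_snoc (y : Fin n → α) (a : α) (j : Fin n) :
    Fin.take j.castSucc j.castSucc.is_le' (Fin.snoc (α := fun _ => α) y a) =
      Fin.take j j.is_le' y := by
  conv_rhs => rw [← Fin.init_snoc (α := fun _ => α) a y]
  rfl

lemma take_last_snoc (y : Fin n → α) (a : α) :
    Fin.take (Fin.last n) (Fin.last n).is_le' (Fin.snoc (α := fun _ => α) y a) = y :=
  Fin.init_snoc (α := fun _ => α) a y

lemma causalProd_snoc (K : ∀ j : Fin (n + 1), (Fin j → α) → α → ℝ) (y : Fin n → α) (a : α) :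
    causalProd K (Fin.snoc (α := fun _ => α) y a) =
      causalProd (fun j : Fin n => K j.castSucc) y * K (Fin.last n) y a := by
  unfold causalProd
  rw [Fin.prod_univ_castSucc, take_last_snoc, Fin.snoc_last]
  simp only [take_castSucc_snoc, Fin.snoc_castSucc]

variable [Fintype α]

lemma sum_eq_sum_snoc (F : (Fin (n + 1) → α) → ℝ) :
    ∑ y, F y = ∑ y : Fin n → α, ∑ a, F (Fin.snoc (α := fun _ => α) y a) := by
  rw [← (Fin.snocEquiv fun _ : Fin (n + 1) => α).sum_comp, Fintype.sum_prod_type_right]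
  rfl

lemma sum_causalProd_le_one {K : ∀ j : Fin n, (Fin j → α) → α → ℝ} (hK : ∀ j u a, 0 ≤ K j u a)
    (hK1 : ∀ j u, ∑ a, K j u a ≤ 1) : ∑ y, causalProd K y ≤ 1 := by
  induction n with
  | zero => simp [causalProd]
  | succ n ih =>
    calc ∑ y, causalProd K y
        = ∑ y, causalProd (fun j : Fin n => K j.castSucc) y * ∑ a, K (Fin.last n) y a := by
          simp only [sum_eq_sum_snoc, causalProd_snoc, ← Finset.mul_sum]
      _ ≤ ∑ y, causalProd (fun j : Fin n => K j.castSucc) y := Finset.sum_le_sum fun y _ =>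
          mul_le_of_le_one_right (causalProd_nonneg (fun j => hK j.castSucc) y) (hK1 (Fin.last n) y)
      _ ≤ 1 := ih (fun j => hK j.castSucc) fun j => hK1 j.castSucc

lemma sum_causalProd_eq_one {K : ∀ j : Fin n, (Fin j → α) → α → ℝ}
    (hK : ∀ j u, ∑ a, K j u a = 1) : ∑ y, causalProd K y = 1 := by
  induction n with
  | zero => simp [causalProd]
  | succ n ih =>
    simp only [sum_eq_sum_snoc, causalProd_snoc, ← Finset.mul_sum, hK, mul_one]
    exact ih fun j => hK j.castSucc

lemma isPmf_causalProd {K : ∀ j : Fin n, (Fin j → α) → α → ℝ} (hK : ∀ j u, IsPmf (K j u)) :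
    IsPmf (causalProd K) :=
  ⟨causalProd_nonneg fun j u => (hK j u).1, sum_causalProd_eq_one fun j u => (hK j u).2⟩

lemma sum_causalProd_mul {K : ∀ j : Fin n, (Fin j → α) → α → ℝ} (hK : ∀ j u, ∑ a, K j u a = 1)
    (j : Fin n) (F : (Fin j → α) → α → ℝ) :
    ∑ y, causalProd K y * F (Fin.take j j.is_le' y) (y j) =
      ∑ y, causalProd K y * ∑ a, K j (Fin.take j j.is_le' y) a * F (Fin.take j j.is_le' y) a := by
  induction n with
  | zero => exact j.elim0
  | succ n ih =>
    rw [sum_eq_sum_snoc, sum_eq_sum_snoc (fun y => causalProd K y * _)]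
    induction j using Fin.lastCases with
    | last =>
      refine Finset.sum_congr rfl fun y _ => ?_
      simp only [causalProd_snoc, take_last_snoc, Fin.snoc_last, mul_assoc, ← Finset.mul_sum,
        ← Finset.sum_mul, hK, one_mul]
    | cast j =>
      have sum_last (y : Fin n → α) (c : ℝ) :
          ∑ a, causalProd (fun j : Fin n => K j.castSucc) y * K (Fin.last n) y a * c =
            causalProd (fun j : Fin n => K j.castSucc) y * c := by
        rw [← Finset.sum_mul, ← Finset.mul_sum, hK, mul_one]
      simp only [causalProd_snoc, take_castSucc_snoc, Fin.snoc_castSucc, sum_last]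
      exact ih (fun j => hK j.castSucc) j F

end CausalProduct

section Entropy

variable {Ω α β γ : Type} [Fintype Ω] {μ : Ω → ℝ}

lemma prD_nonneg (hμ : ∀ ω, 0 ≤ μ ω) (X : Ω → α) (a : α) : 0 ≤ prD μ X a :=
  Finset.sum_nonneg fun ω _ => by split_ifs <;> simp [hμ]

lemma prD_pos (hμ : ∀ ω, 0 ≤ μ ω) (X : Ω → α) {ω : Ω} (h : 0 < μ ω) : 0 < prD μ X (X ω) :=
  h.trans_le <| by
    simpa [prD] using Finset.single_le_sum (f := fun ω' => if X ω' = X ω then μ ω' else 0)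
      (fun ω' _ => by split_ifs <;> simp [hμ]) (Finset.mem_univ ω)

lemma exists_of_prD_ne_zero {X : Ω → α} {a : α} (h : prD μ X a ≠ 0) : ∃ ω, X ω = a ∧ μ ω ≠ 0 := by
  obtain ⟨ω, -, hω⟩ := Finset.exists_ne_zero_of_sum_ne_zero h
  exact ⟨ω, ite_ne_right_iff.1 hω⟩

lemma prD_eq_sum_mul (μ : Ω → ℝ) (X : Ω → α) (a : α) :
    prD μ X a = ∑ ω, μ ω * if X ω = a then 1 else 0 := by
  simp [prD]

lemma sum_prD_mul [Fintype α] (μ : Ω → ℝ) (X : Ω → α) (φ : α → ℝ) :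
    ∑ a, prD μ X a * φ a = ∑ ω, μ ω * φ (X ω) := by
  simp only [prD, Finset.sum_mul, ite_mul, zero_mul]
  rw [Finset.sum_comm]
  simp

lemma sum_prD_pair [Fintype α] (μ : Ω → ℝ) (X : Ω → α) (Y : Ω → β) (b : β) :
    ∑ a, prD μ (fun ω => (X ω, Y ω)) (a, b) = prD μ Y b := by
  simp only [prD, Prod.mk.injEq, ite_and]
  rw [Finset.sum_comm]
  simp

lemma prD_prD [Fintype β] (μ : Ω → ℝ) (Z : Ω → β) (X : β → α) (a : α) :
    prD (prD μ Z) X a = prD μ (fun ω => X (Z ω)) a := by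
  rw [prD_eq_sum_mul, prD_eq_sum_mul, sum_prD_mul μ Z fun z => if X z = a then 1 else 0]

lemma ent_eq_sum [Fintype α] (μ : Ω → ℝ) (X : Ω → α) :
    ent μ X = -∑ ω, μ ω * log (prD μ X (X ω)) := by
  rw [ent, sum_prD_mul μ X fun a => log (prD μ X a)]

lemma ent_prD [Fintype α] [Fintype β] (μ : Ω → ℝ) (Z : Ω → β) (X : β → α) :
    ent (prD μ Z) X = ent μ fun ω => X (Z ω) := by
  simp only [ent, prD_prD]

lemma condEnt_prD [Fintype α] [Fintype β] [Fintype γ] (μ : Ω → ℝ) (Z : Ω → γ) (X : γ → α)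
    (Y : γ → β) :
    condEnt (prD μ Z) X Y = condEnt μ (fun ω => X (Z ω)) (fun ω => Y (Z ω)) := by
  simp only [condEnt, ent_prD]

lemma ent_equiv [Fintype α] [Fintype β] (e : α ≃ β) (μ : Ω → ℝ) (X : Ω → α) :
    ent μ (fun ω => e (X ω)) = ent μ X := by
  simp only [ent, ← e.sum_comp, prD, e.apply_eq_iff_eq]

lemma condEnt_equiv {α' β' : Type} [Fintype α] [Fintype α'] [Fintype β] [Fintype β']
    (e : α ≃ α') (f : β ≃ β') (μ : Ω → ℝ) (X : Ω → α) (Y : Ω → β) :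
    condEnt μ (fun ω => e (X ω)) (fun ω => f (Y ω)) = condEnt μ X Y := by
  unfold condEnt
  rw [ent_equiv f, ← ent_equiv (e.prodCongr f) μ fun ω => (X ω, Y ω)]
  rfl

lemma condEnt_pair [Fintype α] [Fintype β] [Fintype γ] (μ : Ω → ℝ) (X : Ω → α) (Y : Ω → β)
    (Z : Ω → γ) :
    condEnt μ (fun ω => (X ω, Y ω)) Z = condEnt μ X (fun ω => (Y ω, Z ω)) + condEnt μ Y Z := by
  unfold condEnt
  rw [← ent_equiv (Equiv.prodAssoc α β γ) μ fun ω => ((X ω, Y ω), Z ω)]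
  simp only [Equiv.prodAssoc_apply]
  ring

lemma condMutInf_comm [Fintype α] [Fintype β] [Fintype γ] (μ : Ω → ℝ) (X : Ω → α) (Y : Ω → β)
    (Z : Ω → γ) : condMutInf μ X Y Z = condMutInf μ Y X Z := by
  have hXY := condEnt_pair μ X Y Z
  have hYX := condEnt_pair μ Y X Z
  have hswap : condEnt μ (fun ω => (X ω, Y ω)) Z = condEnt μ (fun ω => (Y ω, X ω)) Z :=
    (condEnt_equiv (Equiv.prodComm α β) (Equiv.refl γ) μ (fun ω => (X ω, Y ω)) Z).symm
  unfold condMutInf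
  linarith

lemma continuous_ent [Fintype α] (X : Ω → α) : Continuous fun μ : Ω → ℝ => ent μ X := by
  unfold ent
  refine (continuous_finsetSum _ fun a _ => continuous_mul_log.comp ?_).neg
  simp only [prD_eq_sum_mul]
  fun_prop

lemma continuous_condMutInf [Fintype α] [Fintype β] [Fintype γ] (X : Ω → α) (Y : Ω → β)
    (Z : Ω → γ) : Continuous fun μ : Ω → ℝ => condMutInf μ X Y Z :=
  ((continuous_ent _).sub (continuous_ent _)).sub ((continuous_ent _).sub (continuous_ent _))

lemma sum_mul_log_prod {ι : Type} [Fintype ι] {f : ι → Ω → ℝ}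
    (hf : ∀ ω, μ ω ≠ 0 → ∀ i, f i ω ≠ 0) :
    ∑ ω, μ ω * log (∏ i, f i ω) = ∑ i, ∑ ω, μ ω * log (f i ω) := by
  rw [Finset.sum_comm]
  refine Finset.sum_congr rfl fun ω _ => ?_
  by_cases h : μ ω = 0
  · simp [h]
  · rw [log_prod fun i _ => hf ω h i, Finset.mul_sum]

end Entropy

section ProductLaw

variable {α β γ : Type} [Fintype α] {m : ℕ}

lemma prD_pi (p : α → ℝ) (X : α → β) (b : Fin m → β) :
    prD (fun s : Fin m → α => ∏ i, p (s i)) (fun s i => X (s i)) b = ∏ i, prD p X (b i) := by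
  simp only [prD, Finset.prod_univ_sum, Fintype.piFinset_univ, Finset.prod_ite_zero,
    Finset.mem_univ, true_imp_iff, funext_iff]

lemma isPmf_pi {p : α → ℝ} (hp : IsPmf p) : IsPmf fun s : Fin m → α => ∏ i, p (s i) :=
  isPmf_causalProd (K := fun _ _ => p) fun _ _ => hp

lemma ent_pi [Fintype β] {p : α → ℝ} (hp : IsPmf p) (X : α → β) :
    ent (fun s : Fin m → α => ∏ i, p (s i)) (fun s i => X (s i)) = m * ent p X := by
  have hpos (s : Fin m → α) (hs : ∏ i, p (s i) ≠ 0) (i : Fin m) : prD p X (X (s i)) ≠ 0 :=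
    (prD_pos hp.1 X <| (hp.1 _).lt_of_ne' <|
      Finset.prod_ne_zero_iff.1 hs i (Finset.mem_univ i)).ne'
  have hcoord (i : Fin m) : ∑ s : Fin m → α, (∏ k, p (s k)) * log (prD p X (X (s i))) =
      ∑ a, p a * log (prD p X (X a)) := by
    have h := sum_causalProd_mul (K := fun _ : Fin m => fun _ => p) (fun _ _ => hp.2) i
      fun _ a => log (prD p X (X a))
    rwa [← Finset.sum_mul, sum_causalProd_eq_one fun _ _ => hp.2, one_mul] at h
  simp only [ent_eq_sum, prD_pi, sum_mul_log_prod hpos, hcoord, Finset.sum_const,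
    Finset.card_univ, Fintype.card_fin, nsmul_eq_mul, mul_neg]

lemma condEnt_pi [Fintype β] [Fintype γ] {p : α → ℝ} (hp : IsPmf p) (X : α → β) (Y : α → γ) :
    condEnt (fun s : Fin m → α => ∏ i, p (s i)) (fun s i => X (s i)) (fun s i => Y (s i)) =
      m * condEnt p X Y := by
  unfold condEnt
  rw [← ent_equiv (Equiv.arrowProdEquivProdArrow (Fin m) (fun _ => β) fun _ => γ).symm,
    mul_sub, ← ent_pi hp, ← ent_pi hp]
  rfl

end ProductLaw

section CrossEntropy

variable {Ω α β : Type} [Fintype Ω] {μ : Ω → ℝ}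

lemma sum_mul_log_sub_log_le {ν : Ω → ℝ} (hμ : ∀ ω, 0 ≤ μ ω) (hν : ∀ ω, 0 ≤ ν ω)
    (h : ∀ ω, 0 < μ ω → 0 < ν ω) :
    ∑ ω, μ ω * (log (ν ω) - log (μ ω)) ≤ ∑ ω, ν ω - ∑ ω, μ ω := by
  rw [← Finset.sum_sub_distrib]
  refine Finset.sum_le_sum fun ω _ => ?_
  rcases (hμ ω).eq_or_lt' with h0 | h0
  · simp [h0, hν ω]
  · calc μ ω * (log (ν ω) - log (μ ω)) = μ ω * log (ν ω / μ ω) := by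
          rw [log_div (h ω h0).ne' h0.ne']
      _ ≤ μ ω * (ν ω / μ ω - 1) := by
          gcongr
          exact log_le_sub_one_of_pos (div_pos (h ω h0) h0)
      _ = ν ω - μ ω := by field_simp

/-- The conditional law `p(x | y)` of `X` given `Y`; it is `0` where `y` has probability `0`. -/
def condPr (μ : Ω → ℝ) (X : Ω → α) (Y : Ω → β) (y : β) (x : α) : ℝ :=
  prD μ (fun ω => (X ω, Y ω)) (x, y) / prD μ Y y

lemma condPr_nonneg (hμ : ∀ ω, 0 ≤ μ ω) (X : Ω → α) (Y : Ω → β) (y : β) (x : α) :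
    0 ≤ condPr μ X Y y x :=
  div_nonneg (prD_nonneg hμ _ _) (prD_nonneg hμ _ _)

lemma condPr_pos (hμ : ∀ ω, 0 ≤ μ ω) (X : Ω → α) (Y : Ω → β) {ω : Ω} (h : 0 < μ ω) :
    0 < condPr μ X Y (Y ω) (X ω) :=
  div_pos (prD_pos hμ (fun ω => (X ω, Y ω)) h) (prD_pos hμ Y h)

lemma sum_condPr_le_one [Fintype α] (μ : Ω → ℝ) (X : Ω → α) (Y : Ω → β) (y : β) :
    ∑ x, condPr μ X Y y x ≤ 1 := by
  simp only [condPr, ← Finset.sum_div, sum_prD_pair]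
  exact div_self_le_one _

variable [Fintype α] [Fintype β]

lemma condEnt_eq_neg_sum_mul_log_condPr (hμ : ∀ ω, 0 ≤ μ ω) (X : Ω → α) (Y : Ω → β) :
    condEnt μ X Y = -∑ ω, μ ω * log (condPr μ X Y (Y ω) (X ω)) := by
  rw [condEnt, ent_eq_sum, ent_eq_sum, ← neg_sub', ← Finset.sum_sub_distrib]
  refine congrArg Neg.neg <| Finset.sum_congr rfl fun ω _ => ?_
  rcases (hμ ω).eq_or_lt' with h | h
  · simp [h]
  · rw [condPr, log_div (prD_pos hμ (fun ω => (X ω, Y ω)) h).ne' (prD_pos hμ Y h).ne', mul_sub]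

lemma condEnt_le_neg_sum_mul_log (hμ : ∀ ω, 0 ≤ μ ω) (X : Ω → α) (Y : Ω → β) {q : β → α → ℝ}
    (hq : ∀ y x, 0 ≤ q y x) (hq1 : ∀ y, ∑ x, q y x ≤ 1)
    (hpos : ∀ ω, 0 < μ ω → 0 < q (Y ω) (X ω)) :
    condEnt μ X Y ≤ -∑ ω, μ ω * log (q (Y ω) (X ω)) := by
  set P : α × β → ℝ := prD μ fun ω => (X ω, Y ω) with hP
  set Q : α × β → ℝ := fun z => q z.2 z.1 * prD μ Y z.2 with hQ
  have hP0 (z) : 0 ≤ P z := prD_nonneg hμ _ z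
  have hQ0 (z) : 0 ≤ Q z := mul_nonneg (hq _ _) (prD_nonneg hμ Y _)
  have hPQ (z) (hz : 0 < P z) : 0 < Q z := by
    obtain ⟨ω, rfl, hω⟩ := exists_of_prD_ne_zero hz.ne'
    have hω := (hμ ω).lt_of_ne' hω
    exact mul_pos (hpos ω hω) (prD_pos hμ Y hω)
  have hsum : ∑ z, Q z ≤ ∑ z, P z := by
    rw [Fintype.sum_prod_type_right, Fintype.sum_prod_type_right]
    refine Finset.sum_le_sum fun y _ => ?_
    simp only [hP, hQ, sum_prD_pair, ← Finset.sum_mul]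
    exact mul_le_of_le_one_left (prD_nonneg hμ Y y) (hq1 y)
  have hgibbs := sum_mul_log_sub_log_le hP0 hQ0 hPQ
  have hlog (ω) : μ ω * (log (Q (X ω, Y ω)) - log (P (X ω, Y ω))) =
      μ ω * log (q (Y ω) (X ω)) + μ ω * log (prD μ Y (Y ω)) - μ ω * log (P (X ω, Y ω)) := by
    rcases (hμ ω).eq_or_lt' with h | h
    · simp [h]
    · rw [hQ, log_mul (hpos ω h).ne' (prD_pos hμ Y h).ne']
      ring
  rw [hP, sum_prD_mul μ (fun ω => (X ω, Y ω)) fun z => log (Q z) - log (P z)] at hgibbs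
  simp only [hlog, Finset.sum_sub_distrib, Finset.sum_add_distrib] at hgibbs
  rw [condEnt, ent_eq_sum, ent_eq_sum]
  linarith

end CrossEntropy

section Fano

variable {Ω α β : Type} [Fintype Ω] {μ : Ω → ℝ}

/-- The probability that the estimate `X'` of `X` is wrong. -/
def errorProb (μ : Ω → ℝ) (X X' : Ω → α) : ℝ :=
  ∑ ω, μ ω * if X' ω = X ω then 0 else 1

/-- The kernel which puts mass `1 - P` on the guess `g y` and spreads the mass `P` uniformly over
the remaining letters. -/
def fanoKernel [Fintype α] (g : β → α) (P : ℝ) (y : β) (x : α) : ℝ :=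
  if g y = x then 1 - P else P / (Fintype.card α - 1)

lemma errorProb_nonneg (hμ : ∀ ω, 0 ≤ μ ω) (X X' : Ω → α) : 0 ≤ errorProb μ X X' :=
  Finset.sum_nonneg fun ω _ => mul_nonneg (hμ ω) (by split_ifs <;> norm_num)

lemma sum_mul_ite_eq (hμ : IsPmf μ) (X X' : Ω → α) (u v : ℝ) :
    ∑ ω, μ ω * (if X' ω = X ω then u else v) =
      (1 - errorProb μ X X') * u + errorProb μ X X' * v := by
  rw [← hμ.2, errorProb, ← Finset.sum_sub_distrib, Finset.sum_mul, Finset.sum_mul,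
    ← Finset.sum_add_distrib]
  refine Finset.sum_congr rfl fun ω _ => ?_
  split_ifs <;> ring

lemma errorProb_le_one (hμ : IsPmf μ) (X X' : Ω → α) : errorProb μ X X' ≤ 1 := by
  rw [← hμ.2]
  refine Finset.sum_le_sum fun ω _ => mul_le_of_le_one_right (hμ.1 ω) ?_
  split_ifs <;> norm_num

lemma errorProb_pos (hμ : ∀ ω, 0 ≤ μ ω) {X X' : Ω → α} {ω : Ω} (h : 0 < μ ω)
    (hω : X' ω ≠ X ω) : 0 < errorProb μ X X' :=
  Finset.sum_pos' (fun ω _ => mul_nonneg (hμ ω) (by split_ifs <;> norm_num))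
    ⟨ω, Finset.mem_univ ω, by simpa [hω]⟩

lemma errorProb_lt_one (hμ : IsPmf μ) {X X' : Ω → α} {ω : Ω} (h : 0 < μ ω)
    (hω : X' ω = X ω) : errorProb μ X X' < 1 := by
  rw [← hμ.2]
  refine Finset.sum_lt_sum (fun ω _ => mul_le_of_le_one_right (hμ.1 ω) ?_)
    ⟨ω, Finset.mem_univ ω, by simpa [hω]⟩
  split_ifs <;> norm_num

lemma errorProb_comp_le (hμ : ∀ ω, 0 ≤ μ ω) (X X' : Ω → α) (g : α → β) :
    errorProb μ (fun ω => g (X ω)) (fun ω => g (X' ω)) ≤ errorProb μ X X' :=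
  Finset.sum_le_sum fun ω _ => by
    refine mul_le_mul_of_nonneg_left ?_ (hμ ω)
    by_cases h : X' ω = X ω
    · simp [h]
    · rw [if_neg h]
      split_ifs <;> norm_num

variable [Fintype α]

lemma one_lt_card_of_errorProb_ne_zero {X X' : Ω → α} (h : errorProb μ X X' ≠ 0) :
    1 < Fintype.card α := by
  obtain ⟨ω, -, hω⟩ := Finset.exists_ne_zero_of_sum_ne_zero h
  exact Fintype.one_lt_card_iff.2 ⟨X' ω, X ω, fun h => hω (by simp [h])⟩

lemma fanoKernel_nonneg {P : ℝ} (h0 : 0 ≤ P) (h1 : P ≤ 1) (g : β → α) (y : β) (x : α) :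
    0 ≤ fanoKernel g P y x := by
  have hcard : (1 : ℝ) ≤ Fintype.card α := by exact_mod_cast Fintype.card_pos_iff.2 ⟨x⟩
  unfold fanoKernel
  split_ifs
  · exact sub_nonneg.2 h1
  · exact div_nonneg h0 (sub_nonneg.2 hcard)

lemma sum_fanoKernel_le_one {P : ℝ} (h0 : 0 ≤ P) (g : β → α) (y : β) :
    ∑ x, fanoKernel g P y x ≤ 1 := by
  calc ∑ x, fanoKernel g P y x = 1 - P + P * ((Fintype.card α - 1) / (Fintype.card α - 1)) := by
        unfold fanoKernel
        rw [← Finset.add_sum_erase _ _ (Finset.mem_univ (g y)), if_pos rfl,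
          Finset.sum_congr rfl fun x hx => if_neg (Finset.ne_of_mem_erase hx).symm,
          Finset.sum_const, Finset.card_erase_of_mem (Finset.mem_univ _), nsmul_eq_mul,
          Finset.card_univ, Nat.cast_pred (Fintype.card_pos_iff.2 ⟨g y⟩)]
        ring
    _ ≤ 1 - P + P * 1 := by gcongr; exact div_self_le_one _
    _ = 1 := by ring

lemma condEnt_le_qaryEntropy [Fintype β] (hμ : IsPmf μ) (X : Ω → α) (Y : Ω → β) (g : β → α) :
    condEnt μ X Y ≤ qaryEntropy (Fintype.card α) (errorProb μ X fun ω => g (Y ω)) := by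
  set P := errorProb μ X fun ω => g (Y ω) with hP
  have h0 : 0 ≤ P := errorProb_nonneg hμ.1 _ _
  have h1 : P ≤ 1 := errorProb_le_one hμ _ _
  have hcard (h : P ≠ 0) : (0 : ℝ) < Fintype.card α - 1 :=
    sub_pos.2 <| by exact_mod_cast one_lt_card_of_errorProb_ne_zero h
  have hpos (ω) (h : 0 < μ ω) : 0 < fanoKernel g P (Y ω) (X ω) := by
    unfold fanoKernel
    split_ifs with hω
    · exact sub_pos.2 (errorProb_lt_one hμ h hω)
    · have hP0 : 0 < P := errorProb_pos hμ.1 h hω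
      exact div_pos hP0 (hcard hP0.ne')
  have hlog : P * log (P / (Fintype.card α - 1)) = P * log P - P * log (Fintype.card α - 1) := by
    rcases eq_or_ne P 0 with h | h
    · simp [h]
    · rw [log_div h (hcard h).ne', mul_sub]
  calc condEnt μ X Y ≤ -∑ ω, μ ω * log (fanoKernel g P (Y ω) (X ω)) :=
        condEnt_le_neg_sum_mul_log hμ.1 X Y (fanoKernel_nonneg h0 h1 g)
          (sum_fanoKernel_le_one h0 g) hpos
    _ = -((1 - P) * log (1 - P) + P * log (P / (Fintype.card α - 1))) := by
        simp only [fanoKernel, apply_ite log, sum_mul_ite_eq hμ, ← hP]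
    _ = qaryEntropy (Fintype.card α) P := by
        rw [hlog, qaryEntropy, binEntropy, log_inv, log_inv]
        push_cast
        ring

/-- The right-hand side of Fano's inequality for error probability `ε` on an alphabet of `M`
letters, with the entropy of the error event kept and `log (M - 1)` relaxed to `log M`. -/
def fanoSlack (M : ℕ) (ε : ℝ) : ℝ :=
  binEntropy ε + ε * log M

lemma continuous_fanoSlack (M : ℕ) : Continuous (fanoSlack M) :=
  binEntropy_continuous.add (continuous_id.mul continuous_const)

lemma fanoSlack_zero (M : ℕ) : fanoSlack M 0 = 0 := by
  simp [fanoSlack]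

lemma fanoSlack_pow_le (M : ℕ) {m : ℕ} (hm : 0 < m) {ε : ℝ} (h0 : 0 ≤ ε) (h1 : ε ≤ 1) :
    fanoSlack (M ^ m) ε ≤ m * fanoSlack M ε := by
  have hm1 : (1 : ℝ) ≤ m := by exact_mod_cast hm
  have := le_mul_of_one_le_left (binEntropy_nonneg h0 h1) hm1
  unfold fanoSlack
  rw [Nat.cast_pow, log_pow]
  linarith

lemma condEnt_le_fanoSlack [Fintype β] (hμ : IsPmf μ) (X : Ω → α) (Y : Ω → β) (g : β → α) {ε : ℝ}
    (hε : errorProb μ X (fun ω => g (Y ω)) ≤ ε) (hε2 : ε ≤ 2⁻¹) :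
    condEnt μ X Y ≤ fanoSlack (Fintype.card α) ε := by
  set P := errorProb μ X fun ω => g (Y ω)
  have h0 : 0 ≤ P := errorProb_nonneg hμ.1 _ _
  have hbin : binEntropy P ≤ binEntropy ε :=
    binEntropy_strictMonoOn.monotoneOn ⟨h0, hε.trans hε2⟩ ⟨h0.trans hε, hε2⟩ hε
  have hlog : P * log (Fintype.card α - 1) ≤ ε * log (Fintype.card α) := by
    rcases eq_or_ne P 0 with h | h
    · rw [h, zero_mul]
      exact mul_nonneg (h0.trans hε) (log_natCast_nonneg _)
    · have hcard : (2 : ℝ) ≤ Fintype.card α := by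
        exact_mod_cast one_lt_card_of_errorProb_ne_zero h
      have hlog_le : log (Fintype.card α - 1) ≤ log (Fintype.card α) :=
        log_le_log (by linarith) (by linarith)
      exact mul_le_mul hε hlog_le (log_nonneg (by linarith)) (h0.trans hε)
  calc condEnt μ X Y ≤ qaryEntropy (Fintype.card α) P := condEnt_le_qaryEntropy hμ X Y g
    _ = binEntropy P + P * log (Fintype.card α - 1) := by
        rw [qaryEntropy]
        push_cast
        ring
    _ ≤ fanoSlack (Fintype.card α) ε := add_le_add hbin hlog

end Fano

section TimeAverage

variable {Ω ζ : Type} [Fintype Ω] {μ : Ω → ℝ} {n : ℕ}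

/-- The law of `Z Q` for a time `Q` uniform on `Fin n` and independent of `ω`: the average over
`j` of the laws of `Z j`. -/
def timeAvg (μ : Ω → ℝ) (Z : Fin n → Ω → ζ) (z : ζ) : ℝ :=
  (∑ j, prD μ (Z j) z) / n

lemma timeAvg_nonneg (hμ : ∀ ω, 0 ≤ μ ω) (Z : Fin n → Ω → ζ) (z : ζ) : 0 ≤ timeAvg μ Z z :=
  div_nonneg (Finset.sum_nonneg fun j _ => prD_nonneg hμ (Z j) z) n.cast_nonneg

lemma timeAvg_pos (hμ : ∀ ω, 0 ≤ μ ω) (Z : Fin n → Ω → ζ) (j : Fin n) {ω : Ω} (h : 0 < μ ω) :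
    0 < timeAvg μ Z (Z j ω) :=
  div_pos
    (Finset.sum_pos' (fun i _ => prD_nonneg hμ (Z i) _) ⟨j, Finset.mem_univ j, prD_pos hμ (Z j) h⟩)
    (Nat.cast_pos.2 j.pos)

variable [Fintype ζ]

lemma natCast_mul_sum_timeAvg_mul (μ : Ω → ℝ) (Z : Fin n → Ω → ζ) (φ : ζ → ℝ) :
    n * ∑ z, timeAvg μ Z z * φ z = ∑ j, ∑ ω, μ ω * φ (Z j ω) := by
  rcases n.eq_zero_or_pos with rfl | hn
  · simp
  · simp only [timeAvg, div_mul_eq_mul_div, ← Finset.sum_div, Finset.sum_mul]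
    rw [mul_div_cancel₀ _ (Nat.cast_ne_zero.2 hn.ne'), Finset.sum_comm]
    simp only [sum_prD_mul]

lemma isPmf_timeAvg (hμ : IsPmf μ) (Z : Fin n → Ω → ζ) (hn : 0 < n) : IsPmf (timeAvg μ Z) := by
  have h := natCast_mul_sum_timeAvg_mul μ Z fun _ => 1
  simp only [mul_one, hμ.2, Finset.sum_const, Finset.card_univ, Fintype.card_fin,
    nsmul_eq_mul] at h
  exact ⟨timeAvg_nonneg hμ.1 Z, mul_eq_left₀ (Nat.cast_ne_zero.2 hn.ne') |>.1 h⟩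

/-- At each time `j` the variable `c j` is a function of `B` and of the `A k` with `k < j`. -/
def IsCausal {α β γ : Type} (c : Fin n → Ω → γ) (B : Ω → β) (A : Fin n → Ω → α) : Prop :=
  ∃ h : ∀ j : Fin n, β → (Fin j → α) → γ,
    ∀ j ω, c j ω = h j (B ω) (Fin.take j j.is_le' fun k => A k ω)

lemma condEnt_block_le {α β γ : Type} [Fintype α] [Fintype β] [Fintype γ]
    (hμ : ∀ ω, 0 ≤ μ ω) (Z : Fin n → Ω → ζ) (a : ζ → α) (c : ζ → γ) (B : Ω → β)
    (hc : IsCausal (fun j ω => c (Z j ω)) B (fun j ω => a (Z j ω))) :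
    condEnt μ (fun ω j => a (Z j ω)) B ≤ n * condEnt (timeAvg μ Z) a c := by
  obtain ⟨h, hc⟩ := hc
  set ν := timeAvg μ Z with hν
  have hν0 : ∀ z, 0 ≤ ν z := timeAvg_nonneg hμ Z
  set q : β → (Fin n → α) → ℝ := fun b => causalProd fun j u => condPr ν a c (h j b u) with hq
  have hq_apply (ω) : q (B ω) (fun j => a (Z j ω)) =
      ∏ j, condPr ν a c (c (Z j ω)) (a (Z j ω)) := by
    simp only [hq, causalProd, hc]
  have hfactor (ω) (hω : 0 < μ ω) (j) : 0 < condPr ν a c (c (Z j ω)) (a (Z j ω)) :=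
    condPr_pos hν0 a c (timeAvg_pos hμ Z j hω)
  calc condEnt μ (fun ω j => a (Z j ω)) B
      ≤ -∑ ω, μ ω * log (q (B ω) fun j => a (Z j ω)) :=
        condEnt_le_neg_sum_mul_log hμ _ B
          (fun b => causalProd_nonneg fun j u => condPr_nonneg hν0 a c _)
          (fun b => sum_causalProd_le_one (fun j u => condPr_nonneg hν0 a c _)
            fun j u => sum_condPr_le_one ν a c _)
          fun ω hω => hq_apply ω ▸ Finset.prod_pos fun j _ => hfactor ω hω j
    _ = -∑ j, ∑ ω, μ ω * log (condPr ν a c (c (Z j ω)) (a (Z j ω))) := by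
        simp only [hq_apply]
        rw [sum_mul_log_prod fun ω hω j => (hfactor ω ((hμ ω).lt_of_ne' hω) j).ne']
    _ = n * condEnt ν a c := by
        rw [condEnt_eq_neg_sum_mul_log_condPr hν0, mul_neg, hν,
          natCast_mul_sum_timeAvg_mul μ Z fun z => log (condPr (timeAvg μ Z) a c (c z) (a z))]

end TimeAverage

section Kernel

variable {σ α : Type} [Fintype σ] [Fintype α] {p : σ → ℝ} {W : σ → α → ℝ}

lemma isPmf_mul_kernel (hp : IsPmf p) (hW : ∀ s, IsPmf (W s)) :
    IsPmf fun z : σ × α => p z.1 * W z.1 z.2 :=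
  ⟨fun z => mul_nonneg (hp.1 z.1) ((hW z.1).1 z.2), by
    simp [Fintype.sum_prod_type, ← Finset.mul_sum, (hW _).2, hp.2]⟩

lemma prD_mul_kernel_fst (p : σ → ℝ) (hW : ∀ s, ∑ a, W s a = 1) :
    prD (fun z : σ × α => p z.1 * W z.1 z.2) Prod.fst = p := by
  funext s
  rw [prD, Fintype.sum_prod_type, Fintype.sum_eq_single s fun s' hs => by simp [hs]]
  simp [← Finset.mul_sum, hW]

lemma condEnt_mul_kernel (hp : ∀ s, 0 ≤ p s) (hW : ∀ s, IsPmf (W s)) :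
    condEnt (fun z : σ × α => p z.1 * W z.1 z.2) Prod.snd Prod.fst =
      -∑ z : σ × α, p z.1 * W z.1 z.2 * log (W z.1 z.2) := by
  have hlaw0 (z : σ × α) : 0 ≤ p z.1 * W z.1 z.2 := mul_nonneg (hp z.1) ((hW z.1).1 z.2)
  rw [condEnt_eq_neg_sum_mul_log_condPr hlaw0]
  refine congrArg Neg.neg <| Finset.sum_congr rfl fun z _ => ?_
  rcases eq_or_ne (p z.1) 0 with h | h
  · simp [h]
  · have hjoint : prD (fun z : σ × α => p z.1 * W z.1 z.2) (fun z => (z.2, z.1)) (z.2, z.1) =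
        p z.1 * W z.1 z.2 := by
      have hswap (z' : σ × α) : (z'.2, z'.1) = (z.2, z.1) ↔ z' = z := Prod.swap_injective.eq_iff
      simp only [prD, hswap, Finset.sum_ite_eq', Finset.mem_univ, if_true]
    rw [condPr, hjoint, prD_mul_kernel_fst p fun s => (hW s).2, mul_div_cancel_left₀ _ h]

end Kernel

section Feedback

variable {σ α ξ : Type} {n : ℕ}

/-- The law of source and outputs when a memoryless channel `W` is driven by the encoder `f`,
which sees the source `ω.1` and the outputs `ω.2` received so far. -/
def feedbackLaw (p : σ → ℝ) (W : ξ → α → ℝ) (f : ∀ j : Fin n, σ → (Fin j → α) → ξ)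
    (ω : σ × (Fin n → α)) : ℝ :=
  p ω.1 * causalProd (fun j u => W (f j ω.1 u)) ω.2

/-- The channel input at time `j` and the output it produces. -/
def channelUse (f : ∀ j : Fin n, σ → (Fin j → α) → ξ) (j : Fin n) (ω : σ × (Fin n → α)) : ξ × α :=
  (f j ω.1 (Fin.take j j.is_le' ω.2), ω.2 j)

variable [Fintype σ] [Fintype α] {p : σ → ℝ} {W : ξ → α → ℝ}

lemma isPmf_feedbackLaw (hp : IsPmf p) (hW : ∀ x, IsPmf (W x))
    (f : ∀ j : Fin n, σ → (Fin j → α) → ξ) : IsPmf (feedbackLaw p W f) :=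
  isPmf_mul_kernel hp fun s => isPmf_causalProd fun j u => hW (f j s u)

lemma prD_feedbackLaw_fst (p : σ → ℝ) (hW : ∀ x, ∑ y, W x y = 1)
    (f : ∀ j : Fin n, σ → (Fin j → α) → ξ) : prD (feedbackLaw p W f) Prod.fst = p :=
  prD_mul_kernel_fst p fun s => sum_causalProd_eq_one fun j u => hW (f j s u)

lemma condEnt_feedbackLaw_fst {β γ : Type} [Fintype β] [Fintype γ] (p : σ → ℝ)
    (hW : ∀ x, ∑ y, W x y = 1) (f : ∀ j : Fin n, σ → (Fin j → α) → ξ) (X : σ → β) (Y : σ → γ) :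
    condEnt (feedbackLaw p W f) (fun ω => X ω.1) (fun ω => Y ω.1) = condEnt p X Y := by
  rw [← condEnt_prD, prD_feedbackLaw_fst p hW]

lemma prD_channelUse (p : σ → ℝ) (hW : ∀ x, ∑ y, W x y = 1)
    (f : ∀ j : Fin n, σ → (Fin j → α) → ξ) (j : Fin n) (x : ξ) (y : α) :
    prD (feedbackLaw p W f) (channelUse f j) (x, y) =
      prD (feedbackLaw p W f) (fun ω => (channelUse f j ω).1) x * W x y := by
  have hcond (s : σ) := sum_causalProd_mul (K := fun j u => W (f j s u)) (fun j u => hW _) j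
    fun u a => if f j s u = x ∧ a = y then 1 else 0
  simp only [prD_eq_sum_mul, Finset.sum_mul, Fintype.sum_prod_type, feedbackLaw, channelUse,
    Prod.mk.injEq, mul_assoc, ← Finset.mul_sum, hcond]
  refine Finset.sum_congr rfl fun s _ => congrArg _ <| Finset.sum_congr rfl fun u _ => ?_
  by_cases h : f j s (Fin.take j j.is_le' u) = x <;> simp [h]

lemma timeAvg_channelUse (p : σ → ℝ) (hW : ∀ x, ∑ y, W x y = 1)
    (f : ∀ j : Fin n, σ → (Fin j → α) → ξ) :
    timeAvg (feedbackLaw p W f) (channelUse f) = fun z =>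
      timeAvg (feedbackLaw p W f) (fun j ω => (channelUse f j ω).1) z.1 * W z.1 z.2 := by
  funext z
  simp only [timeAvg, prD_channelUse p hW f _ z.1 z.2, ← Finset.sum_mul, div_mul_eq_mul_div]

lemma condEnt_feedbackLaw [Fintype ξ] (hp : ∀ s, 0 ≤ p s) (hW : ∀ x, IsPmf (W x))
    (f : ∀ j : Fin n, σ → (Fin j → α) → ξ) :
    condEnt (feedbackLaw p W f) Prod.snd Prod.fst =
      n * condEnt (timeAvg (feedbackLaw p W f) (channelUse f)) Prod.snd Prod.fst := by
  have hlaw0 (ω) : 0 ≤ feedbackLaw p W f ω :=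
    mul_nonneg (hp _) (causalProd_nonneg (fun j u => (hW _).1) _)
  have hfactor (ω) (hω : feedbackLaw p W f ω ≠ 0) (j) :
      W (channelUse f j ω).1 (channelUse f j ω).2 ≠ 0 :=
    Finset.prod_ne_zero_iff.1 (right_ne_zero_of_mul hω) j (Finset.mem_univ j)
  calc condEnt (feedbackLaw p W f) Prod.snd Prod.fst
      = -∑ ω, feedbackLaw p W f ω * log (∏ j, W (channelUse f j ω).1 (channelUse f j ω).2) :=
        condEnt_mul_kernel (W := fun s => causalProd fun j u => W (f j s u)) hp
          fun s => isPmf_causalProd fun j u => hW (f j s u)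
    _ = -(n * ∑ z, timeAvg (feedbackLaw p W f) (channelUse f) z * log (W z.1 z.2)) := by
        rw [sum_mul_log_prod hfactor,
          natCast_mul_sum_timeAvg_mul _ _ fun z : ξ × α => log (W z.1 z.2)]
    _ = n * condEnt (timeAvg (feedbackLaw p W f) (channelUse f)) Prod.snd Prod.fst := by
        rw [timeAvg_channelUse p (fun x => (hW x).2) f,
          condEnt_mul_kernel (timeAvg_nonneg hlaw0 _) hW, mul_neg]

end Feedback

section TwoWayConverse

variable {Ω ζ τ₁ τ₂ ξ₁ ξ₂ η₁ η₂ : Type} [Fintype Ω] [Fintype ζ] [Fintype τ₁] [Fintype τ₂]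
  [Fintype ξ₁] [Fintype ξ₂] [Fintype η₁] [Fintype η₂] {μ : Ω → ℝ} {n : ℕ} {Z : Fin n → Ω → ζ}
  {T₁ : Ω → τ₁} {T₂ : Ω → τ₂} {x₁ : ζ → ξ₁} {x₂ : ζ → ξ₂} {y₁ : ζ → η₁} {y₂ : ζ → η₂}

/-- `n` uses of a two-way channel: the `j`-th use `Z j` has inputs `x₁`, `x₂` and outputs `y₁`,
`y₂`. User `i` computes inputs from the message `T i` and the past of its own outputs. That the
channel is memoryless enters only through the entropy of the output block given the messages. -/
structure IsTwoWayTransmission (μ : Ω → ℝ) (Z : Fin n → Ω → ζ) (T₁ : Ω → τ₁) (T₂ : Ω → τ₂)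
    (x₁ : ζ → ξ₁) (x₂ : ζ → ξ₂) (y₁ : ζ → η₁) (y₂ : ζ → η₂) : Prop where
  causal₁ : IsCausal (fun j ω => x₁ (Z j ω)) T₁ (fun j ω => y₁ (Z j ω))
  causal₂ : IsCausal (fun j ω => x₂ (Z j ω)) T₂ (fun j ω => y₂ (Z j ω))
  memoryless : condEnt μ (fun ω => (fun j => y₁ (Z j ω), fun j => y₂ (Z j ω)))
      (fun ω => (T₁ ω, T₂ ω)) =
    n * condEnt (timeAvg μ Z) (fun z => (y₁ z, y₂ z)) (fun z => (x₁ z, x₂ z))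

lemma IsTwoWayTransmission.symm (h : IsTwoWayTransmission μ Z T₁ T₂ x₁ x₂ y₁ y₂) :
    IsTwoWayTransmission μ Z T₂ T₁ x₂ x₁ y₂ y₁ where
  causal₁ := h.causal₂
  causal₂ := h.causal₁
  memoryless := by
    have hblock := condEnt_equiv (Equiv.prodComm _ _) (Equiv.prodComm _ _) μ
      (fun ω => (fun j => y₁ (Z j ω), fun j => y₂ (Z j ω))) (fun ω => (T₁ ω, T₂ ω))
    have hletter := condEnt_equiv (Equiv.prodComm _ _) (Equiv.prodComm _ _) (timeAvg μ Z)
      (fun z => (y₁ z, y₂ z)) (fun z => (x₁ z, x₂ z))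
    exact hblock.trans (h.memoryless.trans (congrArg _ hletter.symm))

lemma IsTwoWayTransmission.condMutInf_block_le (hμ : ∀ ω, 0 ≤ μ ω)
    (h : IsTwoWayTransmission μ Z T₁ T₂ x₁ x₂ y₁ y₂) :
    condMutInf μ T₁ (fun ω j => y₂ (Z j ω)) T₂ ≤ n * condMutInf (timeAvg μ Z) x₁ y₂ x₂ := by
  have houtput₂ : condEnt μ (fun ω j => y₂ (Z j ω)) T₂ ≤ n * condEnt (timeAvg μ Z) y₂ x₂ :=
    condEnt_block_le hμ Z y₂ x₂ T₂ h.causal₂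
  have hcausal : IsCausal (fun j ω => (y₂ (Z j ω), x₁ (Z j ω), x₂ (Z j ω)))
      (fun ω => (fun j => y₂ (Z j ω), T₁ ω, T₂ ω)) (fun j ω => y₁ (Z j ω)) := by
    obtain ⟨f₁, hf₁⟩ := h.causal₁
    obtain ⟨f₂, hf₂⟩ := h.causal₂
    exact ⟨fun j B u => (B.1 j, f₁ j B.2.1 u, f₂ j B.2.2 (Fin.take j j.is_le' B.1)),
      fun j ω => by simp only [hf₁, hf₂]⟩
  have houtput₁ : condEnt μ (fun ω j => y₁ (Z j ω)) (fun ω => (fun j => y₂ (Z j ω), T₁ ω, T₂ ω)) ≤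
      n * condEnt (timeAvg μ Z) y₁ (fun z => (y₂ z, x₁ z, x₂ z)) :=
    condEnt_block_le hμ Z y₁ (fun z => (y₂ z, x₁ z, x₂ z)) _ hcausal
  have hmemoryless := h.memoryless
  rw [condEnt_pair, condEnt_pair] at hmemoryless
  rw [condMutInf_comm μ, condMutInf_comm (timeAvg μ Z), condMutInf, condMutInf]
  linarith

lemma IsTwoWayTransmission.le_of_errorProb_le {α : Type} [Fintype α] {m : ℕ}
    {T₁ : Ω → Fin m → α} (h : IsTwoWayTransmission μ Z T₁ T₂ x₁ x₂ y₁ y₂) (hμ : IsPmf μ)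
    (hm : 0 < m) {b H ε : ℝ} (hb : (n : ℝ) = b * m) (hH : condEnt μ T₁ T₂ = m * H)
    (g : (Fin n → η₂) × τ₂ → Fin m → α)
    (hε : errorProb μ T₁ (fun ω => g (fun j => y₂ (Z j ω), T₂ ω)) ≤ ε) (hε2 : ε ≤ 2⁻¹) :
    H ≤ b * condMutInf (timeAvg μ Z) x₁ y₂ x₂ + fanoSlack (Fintype.card α) ε := by
  have hε0 : 0 ≤ ε := (errorProb_nonneg hμ.1 _ _).trans hε
  have hfano : condEnt μ T₁ (fun ω => (fun j => y₂ (Z j ω), T₂ ω)) ≤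
      m * fanoSlack (Fintype.card α) ε := by
    have hblock := condEnt_le_fanoSlack hμ T₁ (fun ω => (fun j => y₂ (Z j ω), T₂ ω)) g hε hε2
    rw [Fintype.card_pi_const] at hblock
    exact hblock.trans (fanoSlack_pow_le _ hm hε0 (hε2.trans (by norm_num)))
  refine le_of_mul_le_mul_left ?_ (Nat.cast_pos.2 hm : (0 : ℝ) < m)
  calc m * H = condMutInf μ T₁ (fun ω j => y₂ (Z j ω)) T₂ +
        condEnt μ T₁ (fun ω => (fun j => y₂ (Z j ω), T₂ ω)) := by
        rw [condMutInf, hH, sub_add_cancel]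
    _ ≤ n * condMutInf (timeAvg μ Z) x₁ y₂ x₂ + m * fanoSlack (Fintype.card α) ε :=
        add_le_add (h.condMutInf_block_le hμ.1) hfano
    _ = m * (b * condMutInf (timeAvg μ Z) x₁ y₂ x₂ + fanoSlack (Fintype.card α) ε) := by
        rw [hb]
        ring

end TwoWayConverse

section AdaptiveCode

variable {S1 S2 X1 X2 Y1 Y2 : Type} {m n : ℕ}

/-- Two adaptive encoders seen as one encoder for the source pairs, with feedback of both outputs
to a single terminal. -/
def jointEncoder (f1 : ∀ i : Fin n, (Fin m → S1) → (Fin i → Y1) → X1)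
    (f2 : ∀ i : Fin n, (Fin m → S2) → (Fin i → Y2) → X2) (j : Fin n) (s : Fin m → S1 × S2)
    (u : Fin j → Y1 × Y2) : X1 × X2 :=
  (f1 j (fun i => (s i).1) fun k => (u k).1, f2 j (fun i => (s i).2) fun k => (u k).2)

/-- The joint law of the inputs and outputs of one channel use with inputs distributed as `pX`. -/
def letterLaw (chan : X1 → X2 → Y1 × Y2 → ℝ) (pX : X1 × X2 → ℝ) (z : (X1 × X2) × (Y1 × Y2)) : ℝ :=
  pX z.1 * chan z.1.1 z.1.2 z.2

lemma continuous_letterLaw (chan : X1 → X2 → Y1 × Y2 → ℝ) : Continuous (letterLaw chan) := by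
  unfold letterLaw
  fun_prop

variable [Fintype S1] [Fintype S2]

lemma isTwoWayTransmission_feedbackLaw [Fintype X1] [Fintype X2] [Fintype Y1] [Fintype Y2]
    {p : (Fin m → S1 × S2) → ℝ} {W : X1 × X2 → Y1 × Y2 → ℝ} (hp : ∀ s, 0 ≤ p s)
    (hW : ∀ x, IsPmf (W x)) (f1 : ∀ i : Fin n, (Fin m → S1) → (Fin i → Y1) → X1)
    (f2 : ∀ i : Fin n, (Fin m → S2) → (Fin i → Y2) → X2) :
    IsTwoWayTransmission (feedbackLaw p W (jointEncoder f1 f2)) (channelUse (jointEncoder f1 f2))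
      (fun ω i => (ω.1 i).1) (fun ω i => (ω.1 i).2) (fun z => z.1.1) (fun z => z.1.2)
      (fun z => z.2.1) (fun z => z.2.2) where
  causal₁ := ⟨f1, fun _ _ => rfl⟩
  causal₂ := ⟨f2, fun _ _ => rfl⟩
  memoryless := by
    have hsplit := condEnt_equiv (Equiv.arrowProdEquivProdArrow (Fin n) (fun _ => Y1) fun _ => Y2)
      (Equiv.arrowProdEquivProdArrow (Fin m) (fun _ => S1) fun _ => S2)
      (feedbackLaw p W (jointEncoder f1 f2)) Prod.snd Prod.fst
    exact hsplit.trans (condEnt_feedbackLaw hp hW (jointEncoder f1 f2))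

variable (pS : S1 × S2 → ℝ) (chan : X1 → X2 → Y1 × Y2 → ℝ)
  (f1 : ∀ i : Fin n, (Fin m → S1) → (Fin i → Y1) → X1)
  (f2 : ∀ i : Fin n, (Fin m → S2) → (Fin i → Y2) → X2)

lemma twMeasureAdaptive_eq_feedbackLaw :
    twMeasureAdaptive pS chan m n f1 f2 =
      feedbackLaw (fun s => ∏ i, pS (s i)) (fun x => chan x.1 x.2) (jointEncoder f1 f2) :=
  rfl

variable [Fintype X1] [Fintype X2] [Fintype Y1] [Fintype Y2]

lemma twErrAdaptive_eq_errorProb (g1 : (Fin m → S1) → (Fin n → Y1) → Fin m → S2)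
    (g2 : (Fin m → S2) → (Fin n → Y2) → Fin m → S1) :
    twErrAdaptive pS chan m n f1 f2 g1 g2 =
      errorProb (twMeasureAdaptive pS chan m n f1 f2)
        (fun ω => (fun i => (ω.1 i).2, fun i => (ω.1 i).1))
        (fun ω => (g1 (fun i => (ω.1 i).1) fun j => (ω.2 j).1,
          g2 (fun i => (ω.1 i).2) fun j => (ω.2 j).2)) := by
  simp only [twErrAdaptive, errorProb, Prod.mk.injEq]

variable {pS chan}

lemma exists_isPmf_of_twErrAdaptive_le (hpS : IsPmf pS) (hchan : ∀ x1 x2, IsPmf (chan x1 x2))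
    (hm : 0 < m) (hn : 0 < n) {b ε : ℝ} (hb : (n : ℝ) = b * m)
    (g1 : (Fin m → S1) → (Fin n → Y1) → Fin m → S2)
    (g2 : (Fin m → S2) → (Fin n → Y2) → Fin m → S1)
    (hε : twErrAdaptive pS chan m n f1 f2 g1 g2 ≤ ε) (hε2 : ε ≤ 2⁻¹) :
    ∃ pX : X1 × X2 → ℝ, IsPmf pX ∧
      condEnt pS (fun s => s.1) (fun s => s.2) ≤
        b * condMutInf (letterLaw chan pX) (fun z => z.1.1) (fun z => z.2.2) (fun z => z.1.2) +
          fanoSlack (Fintype.card S1) ε ∧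
      condEnt pS (fun s => s.2) (fun s => s.1) ≤
        b * condMutInf (letterLaw chan pX) (fun z => z.1.2) (fun z => z.2.1) (fun z => z.1.1) +
          fanoSlack (Fintype.card S2) ε := by
  set W : X1 × X2 → Y1 × Y2 → ℝ := fun x => chan x.1 x.2
  have hW (x) : IsPmf (W x) := hchan x.1 x.2
  set p : (Fin m → S1 × S2) → ℝ := fun s => ∏ i, pS (s i)
  set μ := feedbackLaw p W (jointEncoder f1 f2)
  set pX : X1 × X2 → ℝ := timeAvg μ fun j ω => (channelUse (jointEncoder f1 f2) j ω).1
  have hμ : IsPmf μ := isPmf_feedbackLaw (isPmf_pi hpS) hW _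
  have hletter : timeAvg μ (channelUse (jointEncoder f1 f2)) = letterLaw chan pX :=
    timeAvg_channelUse p (fun x => (hW x).2) _
  have htrans := isTwoWayTransmission_feedbackLaw (isPmf_pi (m := m) hpS).1 hW f1 f2
  have hsource {α β : Type} [Fintype α] [Fintype β] (X : S1 × S2 → α) (Y : S1 × S2 → β) :
      condEnt μ (fun ω i => X (ω.1 i)) (fun ω i => Y (ω.1 i)) = m * condEnt pS X Y :=
    (condEnt_feedbackLaw_fst p (fun x => (hW x).2) _ (fun s i => X (s i)) fun s i => Y (s i)).trans
      (condEnt_pi hpS X Y)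
  rw [twErrAdaptive_eq_errorProb, twMeasureAdaptive_eq_feedbackLaw] at hε
  refine ⟨pX, isPmf_timeAvg hμ _ hn, hletter ▸ ?_, hletter ▸ ?_⟩
  · exact htrans.le_of_errorProb_le hμ hm hb (hsource Prod.fst Prod.snd) (fun B => g2 B.2 B.1)
      ((errorProb_comp_le hμ.1 _ _ Prod.snd).trans hε) hε2
  · exact htrans.symm.le_of_errorProb_le hμ hm hb (hsource Prod.snd Prod.fst) (fun B => g1 B.2 B.1)
      ((errorProb_comp_le hμ.1 _ _ Prod.fst).trans hε) hε2

end AdaptiveCode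

section Closure

lemma exists_le_and_le_of_forall_le_add {α : Type} [TopologicalSpace α] {K : Set α} {F G : α → ℝ}
    {c d : ℝ} (hK : IsCompact K) (hF : ContinuousOn F K) (hG : ContinuousOn G K)
    (h : ∀ δ > 0, ∃ x ∈ K, c ≤ F x + δ ∧ d ≤ G x + δ) : ∃ x ∈ K, c ≤ F x ∧ d ≤ G x := by
  obtain ⟨x₀, hx₀, -⟩ := h 1 one_pos
  have hcont : ContinuousOn (fun x => min (F x - c) (G x - d)) K :=
    (hF.sub continuousOn_const).inf (hG.sub continuousOn_const)
  obtain ⟨x, hx, hmax⟩ := hK.exists_isMaxOn ⟨x₀, hx₀⟩ hcont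
  have hnonneg : 0 ≤ min (F x - c) (G x - d) := le_of_forall_pos_le_add fun δ hδ => by
    obtain ⟨x', hx', hc, hd⟩ := h δ hδ
    have hmargin : -δ ≤ min (F x' - c) (G x' - d) := le_min (by linarith) (by linarith)
    have hle : min (F x' - c) (G x' - d) ≤ min (F x - c) (G x - d) := hmax hx'
    linarith
  exact ⟨x, hx, sub_nonneg.1 (le_min_iff.1 hnonneg).1, sub_nonneg.1 (le_min_iff.1 hnonneg).2⟩

lemma exists_fanoSlack_lt (M N : ℕ) {δ : ℝ} (hδ : 0 < δ) :
    ∃ ε, 0 < ε ∧ ε ≤ 2⁻¹ ∧ fanoSlack M ε < δ ∧ fanoSlack N ε < δ := by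
  have hsmall (M : ℕ) : ∀ᶠ ε in nhdsWithin 0 (Set.Ioi 0), fanoSlack M ε < δ :=
    ((continuous_fanoSlack M).tendsto' 0 0 (fanoSlack_zero M)).mono_left nhdsWithin_le_nhds
      |>.eventually_lt_const hδ
  have hinterval : ∀ᶠ ε : ℝ in nhdsWithin 0 (Set.Ioi 0), ε ∈ Set.Ioc 0 2⁻¹ :=
    Ioc_mem_nhdsGT (by norm_num)
  obtain ⟨ε, ⟨h0, h2⟩, hM, hN⟩ := (hinterval.and ((hsmall M).and (hsmall N))).exists
  exact ⟨ε, h0, h2, hM, hN⟩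

end Closure

/-- (Shannon-type outer bound for the two-way channel with correlated
sources.) If source-channel rate `b` is achievable over the DM two-way channel
`p(y1,y2|x1,x2)` with general adaptive encoders, then there exists a joint input
distribution `p(x1,x2)` such that `H(S1|S2) ≤ b·I(X1;Y2|X2)` and
`H(S2|S1) ≤ b·I(X2;Y1|X1)`, where `(Y1,Y2)` is obtained from `(X1,X2)` through the
per-letter channel law. -/
theorem two_way_outer_bound
    {S1 S2 X1 X2 Y1 Y2 : Type}
    [Fintype S1] [Fintype S2] [Fintype X1] [Fintype X2] [Fintype Y1] [Fintype Y2]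
    (pS : S1 × S2 → ℝ) (hpS : IsPmf pS)
    (chan : X1 → X2 → Y1 × Y2 → ℝ) (hchan : ∀ x1 x2, IsPmf (chan x1 x2))
    (b : ℝ) (hach : twAchievableAdaptive pS chan b) :
    ∃ pX : X1 × X2 → ℝ, IsPmf pX ∧
      (condEnt pS (fun s => s.1) (fun s => s.2) ≤
        b * condMutInf (fun z : (X1 × X2) × (Y1 × Y2) => pX z.1 * chan z.1.1 z.1.2 z.2)
          (fun z => z.1.1) (fun z => z.2.2) (fun z => z.1.2)) ∧
      (condEnt pS (fun s => s.2) (fun s => s.1) ≤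
        b * condMutInf (fun z : (X1 × X2) × (Y1 × Y2) => pX z.1 * chan z.1.1 z.1.2 z.2)
          (fun z => z.1.2) (fun z => z.2.1) (fun z => z.1.1)) := by
  have hmutInf {α β γ : Type} [Fintype α] [Fintype β] [Fintype γ]
      (X : (X1 × X2) × (Y1 × Y2) → α) (Y : (X1 × X2) × (Y1 × Y2) → β)
      (Z : (X1 × X2) × (Y1 × Y2) → γ) :
      Continuous fun pX => b * condMutInf (letterLaw chan pX) X Y Z :=
    ((continuous_condMutInf X Y Z).comp (continuous_letterLaw chan)).const_mul b
  refine exists_le_and_le_of_forall_le_add (isCompact_stdSimplex ℝ (X1 × X2))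
    (hmutInf (fun z => z.1.1) (fun z => z.2.2) fun z => z.1.2).continuousOn
    (hmutInf (fun z => z.1.2) (fun z => z.2.1) fun z => z.1.1).continuousOn fun δ hδ => ?_
  obtain ⟨ε, hε, hε2, hS1, hS2⟩ := exists_fanoSlack_lt (Fintype.card S1) (Fintype.card S2) hδ
  obtain ⟨m, n, hm, hn, hb, f1, f2, g1, g2, herr⟩ := hach ε hε
  obtain ⟨pX, hpX, h1, h2⟩ :=
    exists_isPmf_of_twErrAdaptive_le f1 f2 hpS hchan hm hn hb g1 g2 herr.le hε2
  exact ⟨pX, hpX, h1.trans (add_le_add_right hS1.le _), h2.trans (add_le_add_right hS2.le _)⟩
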